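/- arXiv:2303.02013 — 3 statements merged into one kernel-verified Lean document; each statement's English description precedes it below -/
import Mathlib

section
/- Let F be a finite field with q elements, B a nondegenerate alternating bilinear form on V = F⁴, and let O be a set of points of ℙ(F, V) containing exactly one point of each totally isotropic two-dimensional subspace of V (an ovoid of W(q)). Then no three distinct points of O lie in a common two-dimensional subspace of V, and every three-dimensional subspace of V contains either exactly 1 or exactly q+1 points of O (i.e., O is an ovoid of PG(3,q)). -/
/-!
A plane of `PG(3, q)` is the polar plane `p^⊥` of a point `p` (its pole), and the totally isotropic
lines through `p` are the lines of `p^⊥` through `p`. If `p ∈ O`, each of them already contains `p`,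
so `p` is the only point of `O` in `p^⊥`; otherwise each of these `q + 1` lines contains exactly one
point of `O`. Letting `p` run over a totally isotropic line gives `|O| = q² + 1`.

If a line `L` contains two points of `O`, then no point of `O` lies on `L^⊥`, so each of the `q + 1`
planes through `L` contains `q + 1` points of `O`. Thus `k = |O ∩ L|` satisfies
`(q + 1)(q + 1 - k) = q² + 1 - k`, that is, `k = 2`.
-/

open Module
open scoped LinearAlgebra.Projectivization

theorem ncard_mul_eq_ncard_mul {α β : Type*} {s : Set α} {t : Set β} (hs : s.Finite)
    (ht : t.Finite) (r : α → β → Prop) {m n : ℕ} (hm : ∀ a ∈ s, {b ∈ t | r a b}.ncard = m)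
    (hn : ∀ b ∈ t, {a ∈ s | r a b}.ncard = n) : s.ncard * m = t.ncard * n := by
  classical
  lift s to Finset α using hs
  lift t to Finset β using ht
  rw [Set.ncard_coe_finset, Set.ncard_coe_finset]
  refine Finset.card_mul_eq_card_mul r (fun a ha => ?_) (fun b hb => ?_)
  · rw [← hm a ha, ← Set.ncard_coe_finset, Finset.coe_bipartiteAbove]
    rfl
  · rw [← hn b hb, ← Set.ncard_coe_finset, Finset.coe_bipartiteBelow]
    rfl

section Points

variable {F V : Type*} [DivisionRing F] [AddCommGroup V] [Module F V]

theorem ncard_setOf_submodule_le (W : Submodule F V) :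
    {x : ℙ F V | x.submodule ≤ W}.ncard = Nat.card (ℙ F W) := by
  rw [← Set.ncard_univ, ← Set.ncard_image_of_injective _
    (Projectivization.map_injective W.subtype W.subtype_injective), Set.image_univ]
  congr 1
  ext x
  rw [Set.mem_range]
  constructor
  · intro hx
    have hxW : x.rep ∈ W := by
      rwa [Set.mem_ofPred_eq, x.submodule_eq, Submodule.span_singleton_le_iff_mem] at hx
    refine ⟨.mk F ⟨x.rep, hxW⟩ fun h => x.rep_nonzero (congrArg Subtype.val h), ?_⟩
    rw [Projectivization.map_mk]
    exact x.mk_rep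
  · rintro ⟨⟨w, hw⟩, rfl⟩
    exact (Submodule.span_singleton_le_iff_mem _ _).2 w.2

theorem finrank_submodule_sup_submodule {x y : ℙ F V} (hxy : x ≠ y) :
    finrank F ↥(x.submodule ⊔ y.submodule) = 2 := by
  have hli := finrank_span_eq_card (Projectivization.linearIndependent_pair_iff_ne.2 hxy)
  rwa [Matrix.range_cons_cons_empty, Fintype.card_fin, Submodule.span_insert,
    ← x.submodule_eq, ← y.submodule_eq] at hli

theorem submodule_sup_submodule_eq {x y : ℙ F V} (hxy : x ≠ y) {L : Submodule F V}
    (hL : finrank F L = 2) (hx : x.submodule ≤ L) (hy : y.submodule ≤ L) :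
    x.submodule ⊔ y.submodule = L :=
  have : Module.Finite F L := Module.finite_of_finrank_eq_succ hL
  Submodule.eq_of_le_of_finrank_eq (sup_le hx hy)
    ((finrank_submodule_sup_submodule hxy).trans hL.symm)

theorem submodule_le_sup_submodule_comm {p x y : ℙ F V} (hx : x ≠ p) (hy : y ≠ p) :
    x.submodule ≤ p.submodule ⊔ y.submodule ↔ y.submodule ≤ p.submodule ⊔ x.submodule := by
  have exchange : ∀ {x y : ℙ F V}, x ≠ p → y ≠ p →
      x.submodule ≤ p.submodule ⊔ y.submodule → y.submodule ≤ p.submodule ⊔ x.submodule :=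
    fun hx hy h => (submodule_sup_submodule_eq hx.symm (finrank_submodule_sup_submodule hy.symm)
      le_sup_left h).ge.trans' le_sup_right
  exact ⟨exchange hx hy, exchange hy hx⟩

theorem finrank_inf_add_one_of_not_le [FiniteDimensional F V] {L H : Submodule F V}
    (hH : finrank F H + 1 = finrank F V) (hLH : ¬ L ≤ H) :
    finrank F ↥(L ⊓ H) + 1 = finrank F L := by
  have hsum := Submodule.finrank_sup_add_finrank_inf_eq L H
  have hlt : finrank F H < finrank F ↥(L ⊔ H) :=
    Submodule.finrank_lt_finrank_of_lt (right_lt_sup.2 hLH)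
  have hle := Submodule.finrank_le (L ⊔ H)
  omega

end Points

section Counting

variable {F V : Type*} [Field F] [Finite F] [AddCommGroup V] [Module F V]

theorem ncard_setOf_submodule_le_of_finrank_eq_one {W : Submodule F V} (hW : finrank F W = 1) :
    {x : ℙ F V | x.submodule ≤ W}.ncard = 1 := by
  rw [ncard_setOf_submodule_le, Projectivization.card_of_finrank F W hW, Finset.sum_range_one,
    pow_zero]

theorem ncard_setOf_submodule_le_of_finrank_eq_two {L : Submodule F V} (hL : finrank F L = 2) :
    {x : ℙ F V | x.submodule ≤ L}.ncard = Nat.card F + 1 := by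
  rw [ncard_setOf_submodule_le, Projectivization.card_of_finrank_two F L hL]

-- Double counting of the pairs `(y, x)` with `x ∈ S` and `y ≠ p` on the line joining `p` and `x`.
theorem ncard_mul_card_add_one_of_existsUnique [Finite V] {W : Submodule F V} {p : ℙ F V}
    (hpW : p.submodule ≤ W) {S : Set (ℙ F V)} (hpS : p ∉ S) (hSW : ∀ x ∈ S, x.submodule ≤ W)
    (hS : ∀ y ≠ p, y.submodule ≤ W →
      ∃! x, x ∈ S ∧ x.submodule ≤ p.submodule ⊔ y.submodule) :
    S.ncard * Nat.card F + 1 = {x : ℙ F V | x.submodule ≤ W}.ncard := by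
  have hcount : ({y : ℙ F V | y.submodule ≤ W} \ {p}).ncard * 1 = S.ncard * Nat.card F := by
    refine ncard_mul_eq_ncard_mul (Set.toFinite _) (Set.toFinite _)
      (fun y x => x.submodule ≤ p.submodule ⊔ y.submodule) ?_ ?_
    · rintro y ⟨hyW, hyp⟩
      obtain ⟨x, hx, hx_unique⟩ := hS y hyp hyW
      exact Set.ncard_eq_one.2 ⟨x, Set.eq_singleton_iff_unique_mem.2 ⟨hx, hx_unique⟩⟩
    · intro x hx
      have hxp : x ≠ p := ne_of_mem_of_not_mem hx hpS
      have hline : {y ∈ {y : ℙ F V | y.submodule ≤ W} \ {p} |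
            x.submodule ≤ p.submodule ⊔ y.submodule} =
          {y | y.submodule ≤ p.submodule ⊔ x.submodule} \ {p} := by
        ext y
        refine ⟨fun ⟨⟨_, hyp⟩, hxy⟩ => ⟨(submodule_le_sup_submodule_comm hxp hyp).1 hxy, hyp⟩,
          fun ⟨hyx, hyp⟩ => ⟨⟨hyx.trans (sup_le hpW (hSW x hx)), hyp⟩,
            (submodule_le_sup_submodule_comm hxp hyp).2 hyx⟩⟩
      rw [hline, Set.ncard_sdiff_singleton_of_mem (Set.mem_ofPred_eq ▸ le_sup_left),
        ncard_setOf_submodule_le_of_finrank_eq_two (finrank_submodule_sup_submodule hxp.symm),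
        Nat.add_sub_cancel]
  rw [← hcount, mul_one, Set.ncard_sdiff_singleton_add_one (Set.mem_ofPred_eq ▸ hpW)]

end Counting

section Orthogonal

variable {F V : Type*} [Field F] [AddCommGroup V] [Module F V] {B : LinearMap.BilinForm F V}

theorem le_orthogonal_comm (hB : B.IsRefl) {M N : Submodule F V} :
    M ≤ B.orthogonal N ↔ N ≤ B.orthogonal M :=
  ⟨fun h _ hn _ hm => hB _ _ (h hm _ hn), fun h _ hm _ hn => hB _ _ (h hn _ hm)⟩

theorem submodule_le_orthogonal_self (hB : B.IsAlt) (x : ℙ F V) :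
    x.submodule ≤ B.orthogonal x.submodule := by
  rw [x.submodule_eq, Submodule.span_singleton_le_iff_mem]
  intro v hv
  obtain ⟨a, rfl⟩ := Submodule.mem_span_singleton.1 hv
  change B (a • x.rep) x.rep = 0
  rw [map_smul, LinearMap.smul_apply, hB, smul_zero]

theorem sup_submodule_le_orthogonal_self (hB : B.IsAlt) {x y : ℙ F V}
    (hxy : x.submodule ≤ B.orthogonal y.submodule) :
    x.submodule ⊔ y.submodule ≤ B.orthogonal (x.submodule ⊔ y.submodule) := by
  have hx := submodule_le_orthogonal_self hB x
  have hy := submodule_le_orthogonal_self hB y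
  have hyx := (le_orthogonal_comm hB.isRefl).1 hxy
  exact sup_le ((le_orthogonal_comm hB.isRefl).2 (sup_le hx hyx))
    ((le_orthogonal_comm hB.isRefl).2 (sup_le hxy hy))

theorem finrank_orthogonal_submodule_add_one [FiniteDimensional F V] (hB : B.Nondegenerate)
    (x : ℙ F V) : finrank F (B.orthogonal x.submodule) + 1 = finrank F V := by
  have hx := x.submodule.finrank_le
  rw [x.finrank_submodule] at hx
  rw [LinearMap.BilinForm.finrank_orthogonal hB, x.finrank_submodule, Nat.sub_add_cancel hx]

theorem exists_orthogonal_submodule_eq [FiniteDimensional F V] (hB : B.IsRefl)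
    (hnd : B.Nondegenerate) {H : Submodule F V} (hH : finrank F H + 1 = finrank F V) :
    ∃ p : ℙ F V, B.orthogonal p.submodule = H := by
  have hfinrank : finrank F (B.orthogonal H) = 1 := by
    rw [LinearMap.BilinForm.finrank_orthogonal hnd, ← hH, Nat.add_sub_cancel_left]
  refine ⟨.mk'' _ hfinrank, ?_⟩
  rw [Projectivization.submodule_mk'', LinearMap.BilinForm.orthogonal_orthogonal hnd hB]

theorem ncard_setOf_submodule_le_inf_orthogonal [Finite F] [FiniteDimensional F V]
    (hB : B.Nondegenerate) {L : Submodule F V} (hL : finrank F L = 2) {x : ℙ F V}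
    (hLx : ¬ L ≤ B.orthogonal x.submodule) :
    {p : ℙ F V | p.submodule ≤ L ⊓ B.orthogonal x.submodule}.ncard = 1 := by
  have hfinrank := finrank_inf_add_one_of_not_le (finrank_orthogonal_submodule_add_one hB x) hLx
  exact ncard_setOf_submodule_le_of_finrank_eq_one (by omega)

theorem exists_finrank_eq_two_le_orthogonal_self [FiniteDimensional F V] (hB : B.IsAlt)
    (hV : 3 ≤ finrank F V) :
    ∃ L : Submodule F V, finrank F L = 2 ∧ L ≤ B.orthogonal L := by
  have : Nontrivial V := Module.nontrivial_of_finrank_pos (R := F) (by omega)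
  obtain ⟨p⟩ : Nonempty (ℙ F V) := inferInstance
  have hnot_le : ¬ B.orthogonal p.submodule ≤ p.submodule := fun hle => by
    have hfinrank := LinearMap.BilinForm.finrank_add_finrank_orthogonal' (B := B) p.submodule
    have hle_one := Submodule.finrank_mono hle
    rw [p.finrank_submodule] at hfinrank hle_one
    omega
  obtain ⟨v, hv, hvp⟩ := SetLike.not_le_iff_exists.1 hnot_le
  have hv0 : v ≠ 0 := fun h => hvp (h ▸ zero_mem _)
  have hle : (Projectivization.mk F v hv0).submodule ≤ B.orthogonal p.submodule := by
    rwa [Projectivization.submodule_mk, Submodule.span_singleton_le_iff_mem]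
  have hne : Projectivization.mk F v hv0 ≠ p := by
    rintro rfl
    exact hvp (Submodule.mem_span_singleton_self v)
  exact ⟨_, finrank_submodule_sup_submodule hne, sup_submodule_le_orthogonal_self hB hle⟩

end Orthogonal

/-- An ovoid of the geometry whose points are the points of `ℙ F V` and whose lines are the totally
isotropic two-dimensional subspaces of `V`, for a bilinear form `B` on `V`: every such line contains
exactly one point of the set. For `B` a symplectic form on `F⁴` this is an ovoid of `W(q)`. Being
totally isotropic is expressed as `L ≤ B.orthogonal L`. -/
def IsSymplecticOvoid {F V : Type*} [Field F] [AddCommGroup V] [Module F V]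
    (B : LinearMap.BilinForm F V) (O : Set (ℙ F V)) : Prop :=
  ∀ L : Submodule F V, finrank F L = 2 → L ≤ B.orthogonal L → ∃! x, x ∈ O ∧ x.submodule ≤ L

namespace IsSymplecticOvoid

variable {F V : Type*} [Field F] [AddCommGroup V] [Module F V] {B : LinearMap.BilinForm F V}
  {O : Set (ℙ F V)}

theorem eq_of_le_orthogonal (hO : IsSymplecticOvoid B O) (hB : B.IsAlt) {x y : ℙ F V}
    (hx : x ∈ O) (hy : y ∈ O) (hxy : x.submodule ≤ B.orthogonal y.submodule) : x = y := by
  by_contra hne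
  exact hne ((hO _ (finrank_submodule_sup_submodule hne)
    (sup_submodule_le_orthogonal_self hB hxy)).unique ⟨hx, le_sup_left⟩ ⟨hy, le_sup_right⟩)

theorem ncard_orthogonal_of_mem (hO : IsSymplecticOvoid B O) (hB : B.IsAlt) {p : ℙ F V}
    (hp : p ∈ O) : {x ∈ O | x.submodule ≤ B.orthogonal p.submodule}.ncard = 1 :=
  Set.ncard_eq_one.2 ⟨p, Set.eq_singleton_iff_unique_mem.2
    ⟨⟨hp, submodule_le_orthogonal_self hB p⟩,
      fun _ hx => hO.eq_of_le_orthogonal hB hx.1 hp hx.2⟩⟩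

variable [Finite F] [Finite V]

theorem ncard_orthogonal_of_notMem (hO : IsSymplecticOvoid B O) (hB : B.IsAlt)
    (hnd : B.Nondegenerate) (hV : finrank F V = 4) {p : ℙ F V} (hp : p ∉ O) :
    {x ∈ O | x.submodule ≤ B.orthogonal p.submodule}.ncard = Nat.card F + 1 := by
  have hfinrank : finrank F (B.orthogonal p.submodule) = 3 := by
    have := finrank_orthogonal_submodule_add_one hnd p
    omega
  have hplane : {x : ℙ F V | x.submodule ≤ B.orthogonal p.submodule}.ncard =
      1 + Nat.card F + Nat.card F ^ 2 := by
    rw [ncard_setOf_submodule_le, Projectivization.card_of_finrank F _ hfinrank]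
    simp only [Finset.sum_range_succ, Finset.sum_range_zero, pow_zero, pow_one, zero_add]
  have hlines : {x ∈ O | x.submodule ≤ B.orthogonal p.submodule}.ncard * Nat.card F + 1 =
      {x : ℙ F V | x.submodule ≤ B.orthogonal p.submodule}.ncard := by
    refine ncard_mul_card_add_one_of_existsUnique (submodule_le_orthogonal_self hB p)
      (fun h => hp h.1) (fun _ hx => hx.2) fun y hyp hyP => ?_
    have hyp_le : p.submodule ≤ B.orthogonal y.submodule := (le_orthogonal_comm hB.isRefl).1 hyP
    obtain ⟨x, ⟨hx, hxL⟩, hx_unique⟩ := hO _ (finrank_submodule_sup_submodule hyp.symm)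
      (sup_submodule_le_orthogonal_self hB hyp_le)
    have hLP : p.submodule ⊔ y.submodule ≤ B.orthogonal p.submodule :=
      sup_le (submodule_le_orthogonal_self hB p) hyP
    exact ⟨x, ⟨⟨hx, hxL.trans hLP⟩, hxL⟩, fun z hz => hx_unique z ⟨hz.1.1, hz.2⟩⟩
  refine Nat.eq_of_mul_eq_mul_right (Nat.card_pos (α := F)) ?_
  linarith

theorem ncard_eq (hO : IsSymplecticOvoid B O) (hB : B.IsAlt) (hnd : B.Nondegenerate)
    (hV : finrank F V = 4) : O.ncard = Nat.card F ^ 2 + 1 := by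
  obtain ⟨L, hL, hLL⟩ := exists_finrank_eq_two_le_orthogonal_self hB (by omega : 3 ≤ finrank F V)
  obtain ⟨x₀, ⟨hx₀, hx₀L⟩, hunique⟩ := hO L hL hLL
  have hcount : ({p : ℙ F V | p.submodule ≤ L} \ {x₀}).ncard * Nat.card F =
      (O \ {x₀}).ncard * 1 := by
    refine ncard_mul_eq_ncard_mul (Set.toFinite _) (Set.toFinite _)
      (fun p x => x.submodule ≤ B.orthogonal p.submodule) ?_ ?_
    · rintro p ⟨hpL, hp⟩
      have hpO : p ∉ O := fun h => hp (hunique p ⟨h, hpL⟩)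
      have hx₀p : x₀.submodule ≤ B.orthogonal p.submodule :=
        hx₀L.trans (hLL.trans (LinearMap.BilinForm.orthogonal_le hpL))
      have hplane : {x ∈ O \ {x₀} | x.submodule ≤ B.orthogonal p.submodule} =
          {x ∈ O | x.submodule ≤ B.orthogonal p.submodule} \ {x₀} :=
        Set.ext fun _ => and_right_comm
      have hx₀_mem : x₀ ∈ {x ∈ O | x.submodule ≤ B.orthogonal p.submodule} := ⟨hx₀, hx₀p⟩
      rw [hplane, Set.ncard_sdiff_singleton_of_mem hx₀_mem,
        hO.ncard_orthogonal_of_notMem hB hnd hV hpO, Nat.add_sub_cancel]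
    · rintro x ⟨hx, hxx₀⟩
      have hx₀x : ¬ x₀.submodule ≤ B.orthogonal x.submodule := fun h =>
        hxx₀ (hO.eq_of_le_orthogonal hB hx₀ hx h).symm
      have hpoint : {p ∈ {p : ℙ F V | p.submodule ≤ L} \ {x₀} |
          x.submodule ≤ B.orthogonal p.submodule} =
            {p | p.submodule ≤ L ⊓ B.orthogonal x.submodule} := by
        ext p
        rw [Set.mem_ofPred_eq, Set.mem_ofPred_eq, le_inf_iff, le_orthogonal_comm hB.isRefl]
        exact ⟨fun ⟨⟨hpL, _⟩, hpx⟩ => ⟨hpL, hpx⟩,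
          fun ⟨hpL, hpx⟩ => ⟨⟨hpL, fun hp => hx₀x (hp ▸ hpx)⟩, hpx⟩⟩
      rw [hpoint]
      exact ncard_setOf_submodule_le_inf_orthogonal hnd hL fun h => hx₀x (hx₀L.trans h)
  rw [Set.ncard_sdiff_singleton_of_mem (Set.mem_ofPred_eq ▸ hx₀L),
    ncard_setOf_submodule_le_of_finrank_eq_two hL, Nat.add_sub_cancel, mul_one] at hcount
  rw [← Set.ncard_sdiff_singleton_add_one hx₀, ← hcount, sq]

theorem ncard_le_of_le_orthogonal (hO : IsSymplecticOvoid B O) (hB : B.IsAlt)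
    (hnd : B.Nondegenerate) (hV : finrank F V = 4) {L : Submodule F V} {p : ℙ F V}
    (hp : p ∉ O) (hLp : L ≤ B.orthogonal p.submodule) :
    {z ∈ O | z.submodule ≤ L}.ncard ≤ Nat.card F + 1 := by
  rw [← hO.ncard_orthogonal_of_notMem hB hnd hV hp]
  exact Set.ncard_le_ncard fun z hz => ⟨hz.1, hz.2.trans hLp⟩

-- Double counting of the pairs `(p, z)` with `p` on `L^⊥` and `z ∈ O` in `p^⊥` but not on `L`.
theorem card_add_one_mul_sub_ncard_eq_ncard_sdiff (hO : IsSymplecticOvoid B O) (hB : B.IsAlt)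
    (hnd : B.Nondegenerate) (hV : finrank F V = 4) {L : Submodule F V} (hL : finrank F L = 2)
    (hLO : ∀ p : ℙ F V, p.submodule ≤ B.orthogonal L → p ∉ O) :
    (Nat.card F + 1) * (Nat.card F + 1 - {z ∈ O | z.submodule ≤ L}.ncard) =
      (O \ {z ∈ O | z.submodule ≤ L}).ncard := by
  have hL' : finrank F (B.orthogonal L) = 2 := by
    rw [LinearMap.BilinForm.finrank_orthogonal hnd, hV, hL]
  have hcount : {p : ℙ F V | p.submodule ≤ B.orthogonal L}.ncard *
      (Nat.card F + 1 - {z ∈ O | z.submodule ≤ L}.ncard) =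
        (O \ {z ∈ O | z.submodule ≤ L}).ncard * 1 := by
    refine ncard_mul_eq_ncard_mul (Set.toFinite _) (Set.toFinite _)
      (fun p z => z.submodule ≤ B.orthogonal p.submodule) ?_ ?_
    · intro p hp
      have hplane : {z ∈ O \ {z ∈ O | z.submodule ≤ L} | z.submodule ≤ B.orthogonal p.submodule} =
          {z ∈ O | z.submodule ≤ B.orthogonal p.submodule} \ {z ∈ O | z.submodule ≤ L} :=
        Set.ext fun _ => and_right_comm
      have hLp : {z ∈ O | z.submodule ≤ L} ⊆ {z ∈ O | z.submodule ≤ B.orthogonal p.submodule} :=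
        fun z hz => ⟨hz.1, hz.2.trans ((le_orthogonal_comm hB.isRefl).1 hp)⟩
      rw [hplane, Set.ncard_sdiff hLp, hO.ncard_orthogonal_of_notMem hB hnd hV (hLO p hp)]
    · rintro z ⟨hz, hzL⟩
      have hpoint : {p ∈ {p : ℙ F V | p.submodule ≤ B.orthogonal L} |
          z.submodule ≤ B.orthogonal p.submodule} =
            {p | p.submodule ≤ B.orthogonal L ⊓ B.orthogonal z.submodule} := by
        ext p
        rw [Set.mem_ofPred_eq, Set.mem_ofPred_eq, Set.mem_ofPred_eq, le_inf_iff,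
          le_orthogonal_comm (N := p.submodule) hB.isRefl]
      have hz_not_le : ¬ B.orthogonal L ≤ B.orthogonal z.submodule := fun h => by
        rw [le_orthogonal_comm hB.isRefl,
          LinearMap.BilinForm.orthogonal_orthogonal hnd hB.isRefl] at h
        exact hzL ⟨hz, h⟩
      rw [hpoint]
      exact ncard_setOf_submodule_le_inf_orthogonal hnd hL' hz_not_le
  rwa [ncard_setOf_submodule_le_of_finrank_eq_two hL', mul_one] at hcount

theorem ncard_eq_two_of_ne (hO : IsSymplecticOvoid B O) (hB : B.IsAlt)
    (hnd : B.Nondegenerate) (hV : finrank F V = 4) {L : Submodule F V} (hL : finrank F L = 2)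
    {x y : ℙ F V} (hxy : x ≠ y) (hx : x ∈ O) (hxL : x.submodule ≤ L) (hy : y ∈ O)
    (hyL : y.submodule ≤ L) : {z ∈ O | z.submodule ≤ L}.ncard = 2 := by
  have hL_le : ∀ {p : ℙ F V}, p.submodule ≤ B.orthogonal L → L ≤ B.orthogonal p.submodule :=
    (le_orthogonal_comm hB.isRefl).1
  have hLO : ∀ p : ℙ F V, p.submodule ≤ B.orthogonal L → p ∉ O := fun p hp hpO =>
    hxy ((hO.eq_of_le_orthogonal hB hx hpO (hxL.trans (hL_le hp))).trans
      (hO.eq_of_le_orthogonal hB hy hpO (hyL.trans (hL_le hp))).symm)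
  obtain ⟨p, hp⟩ : {p : ℙ F V | p.submodule ≤ B.orthogonal L}.Nonempty := by
    rw [← Set.ncard_pos, ncard_setOf_submodule_le_of_finrank_eq_two
      (by rw [LinearMap.BilinForm.finrank_orthogonal hnd, hV, hL])]
    exact Nat.succ_pos _
  obtain ⟨j, hj⟩ := Nat.exists_eq_add_of_le
    (hO.ncard_le_of_le_orthogonal hB hnd hV (hLO p hp) (hL_le hp))
  have hcount := hO.card_add_one_mul_sub_ncard_eq_ncard_sdiff hB hnd hV hL hLO
  have hO_card := Set.ncard_sdiff_add_ncard_of_subset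
    (Set.sep_subset O fun z => z.submodule ≤ L)
  rw [hO.ncard_eq hB hnd hV, ← hcount, Nat.sub_eq_of_eq_add' hj] at hO_card
  have hj_succ : j + 1 = Nat.card F :=
    Nat.eq_of_mul_eq_mul_left (Nat.card_pos (α := F)) (by linarith)
  omega

theorem not_collinear (hO : IsSymplecticOvoid B O) (hB : B.IsAlt) (hnd : B.Nondegenerate)
    (hV : finrank F V = 4) {x y z : ℙ F V} (hx : x ∈ O) (hy : y ∈ O) (hz : z ∈ O)
    (hxy : x ≠ y) (hxz : x ≠ z) (hyz : y ≠ z) {L : Submodule F V} (hL : finrank F L = 2) :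
    ¬ (x.submodule ≤ L ∧ y.submodule ≤ L ∧ z.submodule ≤ L) := by
  rintro ⟨hxL, hyL, hzL⟩
  have htwo_lt : 2 < {z ∈ O | z.submodule ≤ L}.ncard :=
    (Set.two_lt_ncard (Set.toFinite _)).2
      ⟨x, ⟨hx, hxL⟩, y, ⟨hy, hyL⟩, z, ⟨hz, hzL⟩, hxy, hxz, hyz⟩
  exact htwo_lt.ne' (hO.ncard_eq_two_of_ne hB hnd hV hL hxy hx hxL hy hyL)

theorem ncard_eq_one_or_eq_card_add_one (hO : IsSymplecticOvoid B O) (hB : B.IsAlt)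
    (hnd : B.Nondegenerate) (hV : finrank F V = 4) {M : Submodule F V} (hM : finrank F M = 3) :
    {x ∈ O | x.submodule ≤ M}.ncard = 1 ∨ {x ∈ O | x.submodule ≤ M}.ncard = Nat.card F + 1 := by
  obtain ⟨p, rfl⟩ := exists_orthogonal_submodule_eq hB.isRefl hnd (by omega : finrank F M + 1 = _)
  by_cases hp : p ∈ O
  · exact .inl (hO.ncard_orthogonal_of_mem hB hp)
  · exact .inr (hO.ncard_orthogonal_of_notMem hB hnd hV hp)

end IsSymplecticOvoid

theorem ovoid_of_Wq_is_ovoid_of_PG3q_general {F V : Type*} [Field F] [Finite F] [AddCommGroup V]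
    [Module F V] (hV : finrank F V = 4) {B : LinearMap.BilinForm F V} (hB : B.IsAlt)
    (hnd : B.Nondegenerate) {O : Set (ℙ F V)} (hO : IsSymplecticOvoid B O) :
    (∀ x ∈ O, ∀ y ∈ O, ∀ z ∈ O, x ≠ y → x ≠ z → y ≠ z →
      ∀ L : Submodule F V, finrank F L = 2 →
        ¬ (x.submodule ≤ L ∧ y.submodule ≤ L ∧ z.submodule ≤ L)) ∧
    (∀ M : Submodule F V, finrank F M = 3 →
      {x ∈ O | x.submodule ≤ M}.ncard = 1 ∨
        {x ∈ O | x.submodule ≤ M}.ncard = Nat.card F + 1) := by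
  have : FiniteDimensional F V := Module.finite_of_finrank_eq_succ hV
  have : Finite V := Module.finite_of_finite F
  exact ⟨fun _ hx _ hy _ hz hxy hxz hyz _ hL =>
    hO.not_collinear hB hnd hV hx hy hz hxy hxz hyz hL,
    fun _ hM => hO.ncard_eq_one_or_eq_card_add_one hB hnd hV hM⟩

/-- An ovoid of the generalized quadrangle `W(q)` (a set of points of
`ℙ(F, F⁴)` containing exactly one point of every totally isotropic
two-dimensional subspace, where `B` is a nondegenerate alternating bilinear
form on `F⁴` and `|F| = q`) is an ovoid of `PG(3, q)`: no three of its points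
lie in a common two-dimensional subspace, and every three-dimensional
subspace (plane of `PG(3, q)`) contains either exactly `1` or exactly `q + 1`
of its points. -/
theorem ovoid_of_Wq_is_ovoid_of_PG3q
    {q : ℕ} (F : Type) [Field F] [Fintype F] (hF : Fintype.card F = q)
    (B : (Fin 4 → F) →ₗ[F] (Fin 4 → F) →ₗ[F] F)
    -- `B` is nondegenerate
    (hnd : ∀ v, (∀ w, B v w = 0) → v = 0)
    -- `B` is alternating
    (halt : ∀ v, B v v = 0)
    (O : Set (Projectivization F (Fin 4 → F)))
    -- `O` contains exactly one point of each totally isotropic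
    -- two-dimensional subspace of `V = F⁴`
    (hO : ∀ M : Submodule F (Fin 4 → F), Module.finrank F M = 2 →
        (∀ v ∈ M, ∀ w ∈ M, B v w = 0) →
        ∃! x, x ∈ O ∧ x.submodule ≤ M) :
    -- no three distinct points of `O` lie in a common 2-dimensional subspace
    (∀ x ∈ O, ∀ y ∈ O, ∀ z ∈ O, x ≠ y → x ≠ z → y ≠ z →
        ∀ M : Submodule F (Fin 4 → F), Module.finrank F M = 2 →
          ¬ (x.submodule ≤ M ∧ y.submodule ≤ M ∧ z.submodule ≤ M)) ∧
    -- every 3-dimensional subspace contains exactly `1` or `q + 1` points of `O`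
    (∀ M : Submodule F (Fin 4 → F), Module.finrank F M = 3 →
        {x | x ∈ O ∧ x.submodule ≤ M}.ncard = 1 ∨
        {x | x ∈ O ∧ x.submodule ≤ M}.ncard = q + 1) := by
  have hnd' : LinearMap.BilinForm.Nondegenerate B :=
    (LinearMap.IsRefl.nondegenerate_iff_separatingLeft (LinearMap.IsAlt.isRefl halt)).2 hnd
  rw [← hF, ← Nat.card_eq_fintype_card]
  exact ovoid_of_Wq_is_ovoid_of_PG3q_general (finrank_fin_fun F) halt hnd'
    fun M hM hMM => hO M hM fun v hv w hw => hMM hw v hv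
end

section
/- Let I be an inversive plane of even order q, let p be a pencil of I with carrier x, and let C be a circle of I such that x ∉ C and C ∉ p. Then there is a unique circle D ∈ p such that |C ∩ D| = 1 (i.e., D is tangent to C). -/
/-- An inversive plane of order `q` on a finite point set `P`:
`|P| = q² + 1`, every circle has `q + 1` points, and any three distinct
points lie in exactly one circle. -/
structure InversivePlane (q : ℕ) (P : Type) [Fintype P] where
  two_le : 2 ≤ q
  circles : Finset (Finset P)
  card_points : Fintype.card P = q ^ 2 + 1
  circle_card : ∀ C ∈ circles, C.card = q + 1
  three_points : ∀ x y z : P, x ≠ y → x ≠ z → y ≠ z →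
      ∃! C, C ∈ circles ∧ x ∈ C ∧ y ∈ C ∧ z ∈ C

/-- A pencil with carrier `x` in an inversive plane: a set of circles, each
containing `x`, any two distinct members of which meet exactly in `{x}`,
such that every point other than `x` lies in exactly one of its circles. -/
def InversivePlane.IsPencil {q : ℕ} {P : Type} [Fintype P] [DecidableEq P]
    (I : InversivePlane q P) (x : P) (p : Finset (Finset P)) : Prop :=
  (∀ C ∈ p, C ∈ I.circles ∧ x ∈ C) ∧
  (∀ C ∈ p, ∀ D ∈ p, C ≠ D → C ∩ D = {x}) ∧
  (∀ y : P, y ≠ x → ∃! C, C ∈ p ∧ y ∈ C)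

/-!
The circles through `x` are the lines of an affine plane of order `q`, in which `C` is an oval and
the pencils with carrier `x` are the parallel classes. Of the `q + 1` circles through `x` and a
point of `C`, exactly `q` join that point to the other points of `C`, so one is tangent to `C`;
hence there are `q + 1` tangents through `x`. As `|C| = q + 1` is odd and circles meet in at most
two points, both a pencil and the set of circles through `x` and a second point outside `C` contain
an odd number of tangents. The pencil has only `q` circles to cover `C`, so some `L` in it is not
tangent to `C`. If the pencil contains `t` tangents, the `q` points of `L` other than `x` lie on
distinct tangents outside the pencil, whence `q ≤ (q + 1) - t`.
-/

section UniqueCover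

open Finset

variable {α : Type*} [DecidableEq α] {F G : Finset (Finset α)} {A C : Finset α} {k : ℕ}

/-- The family `F` covers `A` exactly once. Its members may overlap outside `A`, which lets the
circles through two fixed points count as a partition of the remaining points. -/
def CoversOnce (F : Finset (Finset α)) (A : Finset α) : Prop :=
  ∀ a ∈ A, ∃! E, E ∈ F ∧ a ∈ E

theorem CoversOnce.sum_card_inter (h : CoversOnce F A) : ∑ E ∈ F, #(A ∩ E) = #A := by
  rw [Finset.sum_card_inter (n := 1), mul_one]
  intro a ha
  simpa only [card_eq_one_iff_existsUnique, mem_filter] using h a ha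

theorem CoversOnce.card_mul_eq (h : CoversOnce F A) (hk : ∀ E ∈ F, #(A ∩ E) = k) :
    #F * k = #A := by
  rw [← h.sum_card_inter, sum_const_nat hk]

/-- The members of the family `F` that are tangent to `C`. -/
def tangentMembers (F : Finset (Finset α)) (C : Finset α) : Finset (Finset α) :=
  {E ∈ F | #(C ∩ E) = 1}

@[simp]
theorem mem_tangentMembers {E : Finset α} :
    E ∈ tangentMembers F C ↔ E ∈ F ∧ #(C ∩ E) = 1 :=
  mem_filter

theorem tangentMembers_mono (h : F ⊆ G) : tangentMembers F C ⊆ tangentMembers G C :=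
  filter_subset_filter _ h

end UniqueCover

namespace InversivePlane

open Finset

variable {q : ℕ} {P : Type} [Fintype P] {I : InversivePlane q P}
  {A C D : Finset P} {F p : Finset (Finset P)} {x y z : P}

theorem eq_of_three_mem (hC : C ∈ I.circles) (hD : D ∈ I.circles)
    (hxy : x ≠ y) (hxz : x ≠ z) (hyz : y ≠ z) (hxC : x ∈ C) (hyC : y ∈ C) (hzC : z ∈ C)
    (hxD : x ∈ D) (hyD : y ∈ D) (hzD : z ∈ D) : C = D :=
  (I.three_points x y z hxy hxz hyz).unique ⟨hC, hxC, hyC, hzC⟩ ⟨hD, hxD, hyD, hzD⟩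

variable [DecidableEq P]

theorem card_inter_le_two (hC : C ∈ I.circles) (hD : D ∈ I.circles) (hCD : C ≠ D) :
    #(C ∩ D) ≤ 2 := by
  by_contra! h
  obtain ⟨a, b, c, ha, hb, hc, hab, hac, hbc⟩ := two_lt_card_iff.mp h
  rw [mem_inter] at ha hb hc
  exact hCD (eq_of_three_mem hC hD hab hac hbc ha.1 hb.1 hc.1 ha.2 hb.2 hc.2)

theorem odd_card_tangentMembers (hq : Even q) (hC : C ∈ I.circles) (hF : F ⊆ I.circles)
    (hCF : C ∉ F) (hcover : CoversOnce F C) : Odd #(tangentMembers F C) := by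
  have odd_inter_iff : ∀ E ∈ F, Odd #(C ∩ E) ↔ #(C ∩ E) = 1 := by
    intro E hE
    have := card_inter_le_two hC (hF hE) (ne_of_mem_of_not_mem hE hCF).symm
    grind
  have odd_sum : Odd (∑ E ∈ F, #(C ∩ E)) := by
    rw [hcover.sum_card_inter, I.circle_card C hC]
    exact hq.add_one
  rwa [odd_sum_iff_odd_card_odd, filter_congr odd_inter_iff] at odd_sum

theorem IsPencil.subset_circles (hp : I.IsPencil x p) : p ⊆ I.circles :=
  fun E hE => (hp.1 E hE).1

theorem IsPencil.carrier_mem (hp : I.IsPencil x p) (hD : D ∈ p) : x ∈ D :=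
  (hp.1 D hD).2

theorem IsPencil.coversOnce (hp : I.IsPencil x p) (hxA : x ∉ A) : CoversOnce p A :=
  fun y hy => hp.2.2 y (ne_of_mem_of_not_mem hy hxA)

theorem IsPencil.card_eq (hp : I.IsPencil x p) : #p = q := by
  have card_inter : ∀ E ∈ p, #({x}ᶜ ∩ E) = q := by
    intro E hE
    rw [inter_comm, ← sdiff_eq_inter_compl, sdiff_singleton_eq_erase,
      card_erase_of_mem (hp.carrier_mem hE), I.circle_card E (hp.subset_circles hE),
      Nat.add_sub_cancel]
  have count : #p * q = q * q := by
    rw [(hp.coversOnce (by simp)).card_mul_eq card_inter, card_compl, I.card_points, card_singleton,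
      Nat.add_sub_cancel, sq]
  exact Nat.eq_of_mul_eq_mul_right (Nat.zero_lt_of_lt I.two_le) count

theorem IsPencil.exists_not_tangent (hp : I.IsPencil x p) (hC : C ∈ I.circles) (hxC : x ∉ C) :
    ∃ L ∈ p, #(C ∩ L) ≠ 1 := by
  by_contra! h
  have := (hp.coversOnce hxC).card_mul_eq h
  rw [hp.card_eq, I.circle_card C hC] at this
  lia

/-- The bundle with carriers `x` and `y`: all circles through these two points. -/
def bundle (I : InversivePlane q P) (x y : P) : Finset (Finset P) :=
  {E ∈ I.circles | x ∈ E ∧ y ∈ E}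

@[simp]
theorem mem_bundle : D ∈ I.bundle x y ↔ D ∈ I.circles ∧ x ∈ D ∧ y ∈ D :=
  mem_filter

theorem notMem_bundle (hxC : x ∉ C) : C ∉ I.bundle x y :=
  fun h => hxC (mem_bundle.mp h).2.1

theorem bundle_coversOnce (hxy : x ≠ y) (hxA : x ∉ A) (hyA : y ∉ A) :
    CoversOnce (I.bundle x y) A := by
  intro a ha
  simpa only [mem_bundle, and_assoc] using I.three_points x y a hxy
    (ne_of_mem_of_not_mem ha hxA).symm (ne_of_mem_of_not_mem ha hyA).symm

theorem card_bundle (hxy : x ≠ y) : #(I.bundle x y) = q + 1 := by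
  have hq := I.two_le
  have card_inter : ∀ E ∈ I.bundle x y, #({x, y}ᶜ ∩ E) = q - 1 := by
    intro E hE
    obtain ⟨hE, hxE, hyE⟩ := mem_bundle.mp hE
    rw [inter_comm, ← sdiff_eq_inter_compl, card_sdiff_of_subset (by grind), I.circle_card E hE,
      card_pair hxy]
    lia
  have count : #(I.bundle x y) * (q - 1) = (q + 1) * (q - 1) := by
    rw [(bundle_coversOnce hxy (by simp) (by simp)).card_mul_eq card_inter, card_compl,
      I.card_points, card_pair hxy, ← Nat.sq_sub_sq, one_pow]
    lia
  exact Nat.eq_of_mul_eq_mul_right (by lia) count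

theorem card_tangentMembers_bundle (hC : C ∈ I.circles) (hxC : x ∉ C) (hyC : y ∈ C) :
    #(tangentMembers (I.bundle x y) C) = 1 := by
  have hxy : x ≠ y := (ne_of_mem_of_not_mem hyC hxC).symm
  have secant_or_tangent : ∀ E ∈ I.bundle x y,
      #(C.erase y ∩ E) + (if #(C ∩ E) = 1 then 1 else 0) = 1 := by
    intro E hE
    have le_two := card_inter_le_two hC (mem_bundle.mp hE).1
      (ne_of_mem_of_not_mem hE (notMem_bundle hxC)).symm
    have hy : y ∈ C ∩ E := mem_inter.mpr ⟨hyC, (mem_bundle.mp hE).2.2⟩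
    have pos := card_pos.mpr ⟨y, hy⟩
    rw [erase_inter, card_erase_of_mem hy]
    grind
  have secants : ∑ E ∈ I.bundle x y, #(C.erase y ∩ E) = q := by
    rw [(bundle_coversOnce hxy (by simp [hxC]) (notMem_erase y C)).sum_card_inter,
      card_erase_of_mem hyC, I.circle_card C hC, Nat.add_sub_cancel]
  have total := sum_const_nat secant_or_tangent
  rw [sum_add_distrib, secants, ← card_filter, card_bundle hxy, mul_one] at total
  exact Nat.add_left_cancel total

theorem tangentMembers_bundle_nonempty (hq : Even q) (hC : C ∈ I.circles) (hxC : x ∉ C)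
    (hxz : x ≠ z) : (tangentMembers (I.bundle x z) C).Nonempty := by
  rw [← card_pos]
  by_cases hzC : z ∈ C
  · exact (card_tangentMembers_bundle hC hxC hzC).symm ▸ one_pos
  · exact (odd_card_tangentMembers hq hC (filter_subset _ _) (notMem_bundle hxC)
      (bundle_coversOnce hxz hxC hzC)).pos

/-- All circles through the point `x`. -/
def circlesThrough (I : InversivePlane q P) (x : P) : Finset (Finset P) :=
  {E ∈ I.circles | x ∈ E}

@[simp]
theorem mem_circlesThrough : D ∈ I.circlesThrough x ↔ D ∈ I.circles ∧ x ∈ D :=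
  mem_filter

theorem IsPencil.subset_circlesThrough (hp : I.IsPencil x p) : p ⊆ I.circlesThrough x :=
  fun E hE => mem_circlesThrough.mpr (hp.1 E hE)

theorem tangentMembers_circlesThrough_coversOnce (hC : C ∈ I.circles) (hxC : x ∉ C) :
    CoversOnce (tangentMembers (I.circlesThrough x) C) C := by
  intro y hyC
  have := card_eq_one_iff_existsUnique.mp (card_tangentMembers_bundle hC hxC hyC)
  simpa only [mem_tangentMembers, mem_circlesThrough, mem_bundle, and_assoc, and_comm,
    and_left_comm] using this

theorem card_tangentMembers_circlesThrough (hC : C ∈ I.circles) (hxC : x ∉ C) :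
    #(tangentMembers (I.circlesThrough x) C) = q + 1 := by
  rw [← I.circle_card C hC, ← (tangentMembers_circlesThrough_coversOnce hC hxC).card_mul_eq
    (fun E hE => (mem_tangentMembers.mp hE).2), mul_one]

theorem IsPencil.le_card_tangentMembers_sdiff (hp : I.IsPencil x p) (hq : Even q)
    (hC : C ∈ I.circles) (hxC : x ∉ C) :
    q ≤ #(tangentMembers (I.circlesThrough x) C \ tangentMembers p C) := by
  obtain ⟨L, hLp, hL⟩ := hp.exists_not_tangent hC hxC
  have hLI := hp.subset_circles hLp
  have hxL := hp.carrier_mem hLp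
  have card_erase : #(L.erase x) = q := by
    rw [card_erase_of_mem hxL, I.circle_card L hLI, Nat.add_sub_cancel]
  refine card_erase.symm.trans_le (card_le_card_of_forall_subsingleton (· ∈ ·) ?_ ?_)
  · intro z hz
    obtain ⟨hzx, hzL⟩ := mem_erase.mp hz
    obtain ⟨E, hE⟩ := tangentMembers_bundle_nonempty hq hC hxC hzx.symm
    obtain ⟨⟨hEI, hxE, hzE⟩, hCE⟩ : (E ∈ I.circles ∧ x ∈ E ∧ z ∈ E) ∧ #(C ∩ E) = 1 := by
      simpa only [mem_tangentMembers, mem_bundle] using hE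
    have hEp : E ∉ p := by
      intro hEp
      have hEL : E = L := (hp.2.2 z hzx).unique ⟨hEp, hzE⟩ ⟨hLp, hzL⟩
      exact hL (hEL ▸ hCE)
    exact ⟨E, by simp [hEI, hxE, hCE, hEp], hzE⟩
  · rintro E hE z ⟨hz, hzE⟩ w ⟨hw, hwE⟩
    obtain ⟨⟨hEI, hxE⟩, hCE⟩ : (E ∈ I.circles ∧ x ∈ E) ∧ #(C ∩ E) = 1 := by
      simpa only [mem_tangentMembers, mem_circlesThrough] using (mem_sdiff.mp hE).1
    obtain ⟨hzx, hzL⟩ := mem_erase.mp hz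
    obtain ⟨hwx, hwL⟩ := mem_erase.mp hw
    by_contra hzw
    have hEL : E = L :=
      eq_of_three_mem hEI hLI hzx.symm hwx.symm hzw hxE hzE hwE hxL hzL hwL
    exact hL (hEL ▸ hCE)

theorem IsPencil.card_tangentMembers_le_one (hp : I.IsPencil x p) (hq : Even q)
    (hC : C ∈ I.circles) (hxC : x ∉ C) : #(tangentMembers p C) ≤ 1 := by
  have outside := hp.le_card_tangentMembers_sdiff hq hC hxC
  have inside_add_outside := card_sdiff_add_card_eq_card
    (tangentMembers_mono (C := C) hp.subset_circlesThrough)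
  have total := card_tangentMembers_circlesThrough hC hxC
  lia

end InversivePlane

/-- In an inversive plane of even order `q`, if `p` is a pencil with carrier
`x` and `C` is a circle with `x ∉ C` and `C ∉ p`, then exactly one circle of
`p` is tangent to `C`. -/
theorem exists_unique_tangent_circle_in_pencil
    {q : ℕ} {P : Type} [Fintype P] [DecidableEq P]
    (hq : Even q) (I : InversivePlane q P)
    (x : P) (p : Finset (Finset P)) (hp : I.IsPencil x p)
    (C : Finset P) (hC : C ∈ I.circles) (hxC : x ∉ C) (hCp : C ∉ p) :
    ∃! D, D ∈ p ∧ (C ∩ D).card = 1 := by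
  have odd : Odd (tangentMembers p C).card :=
    InversivePlane.odd_card_tangentMembers hq hC hp.subset_circles hCp (hp.coversOnce hxC)
  have le_one : (tangentMembers p C).card ≤ 1 := hp.card_tangentMembers_le_one hq hC hxC
  have eq_one : (tangentMembers p C).card = 1 := le_antisymm le_one odd.pos
  simpa only [mem_tangentMembers] using Finset.card_eq_one_iff_existsUnique.mp eq_one
end

section
/- Let π be a finite projective plane of even order n and let C be an oval in π (a set of n+1 points, no three of which lie on a common line). Then there is a unique point x of π such that every line through x meets C in exactly one point; equivalently, the tangent lines to C are precisely the lines through x (this point x is the nucleus of C, and x ∉ C). -/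
open Configuration

/-!
Each point of an oval `C` lies on exactly one tangent, because `n` of the `n + 1` lines through it
are taken up by the other points of `C`; so there are `n + 1` tangents. Since `#C = n + 1` is odd
and a line meets `C` in at most two points, the lines through a point off `C` cannot all meet `C`
in an even number of points; so every point lies on a tangent. But `n + 1` lines that cover the
plane are the pencil of a point (the dual of the fact that a blocking set of `n + 1` points is a
line): let `x` be the intersection of two of them, and suppose that some line `m` through `x` were
not among them. Each of the lines covers just one of the `n + 1` points of `m`, and two of them
cover the same point `x`, so some point of `m` is left uncovered.
-/

section

open Finset Nondegenerate

variable {P L : Type*} [Membership P L]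

open Classical in
theorem lineCount_eq_card_filter [Fintype L] (p : P) : lineCount L p = #{l : L | p ∈ l} := by
  rw [lineCount, Nat.card_eq_fintype_card, Fintype.card_subtype]

theorem eq_of_forall_mem_imp_mem [HasLines P L] {x y : P} (h : ∀ l : L, y ∈ l → x ∈ l) :
    y = x := by
  by_contra hyx
  obtain ⟨m, ⟨hym, hxm⟩, -⟩ := HasLines.existsUnique_line P L y x hyx
  obtain ⟨p, hpm⟩ := exists_point (P := P) m
  obtain ⟨l, ⟨hyl, hpl⟩, -⟩ := HasLines.existsUnique_line P L y p (ne_of_mem_of_not_mem hym hpm)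
  obtain rfl : m = l := (eq_or_eq hym hxm hyl (h l hyl)).resolve_left hyx
  exact hpm hpl

open Classical in
theorem sum_card_filter_mem_eq_card [HasLines P L] [Fintype L] {S : Finset P} {y : P}
    (hy : y ∉ S) : ∑ l : L with y ∈ l, #{p ∈ S | p ∈ l} = #S := by
  have card_joining_lines (p : P) (hp : p ∈ S) : #{l : L | y ∈ l ∧ p ∈ l} = 1 := by
    rw [← Fintype.existsUnique_iff_card_one]
    exact HasLines.existsUnique_line P L y p (ne_of_mem_of_not_mem hp hy).symm
  calc ∑ l : L with y ∈ l, #{p ∈ S | p ∈ l}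
      = ∑ p ∈ S, #{l : L | y ∈ l ∧ p ∈ l} := by
        simpa only [bipartiteAbove, bipartiteBelow, filter_filter] using
          (sum_card_bipartiteAbove_eq_sum_card_bipartiteBelow
            (s := S) (t := {l : L | y ∈ l}) (· ∈ ·)).symm
    _ = #S := by rw [sum_congr rfl card_joining_lines, card_eq_sum_ones]

open Classical in
theorem exists_odd_card_filter_mem [HasLines P L] [Finite L] {S : Finset P} (hS : Odd #S)
    {y : P} (hy : y ∉ S) : ∃ l : L, y ∈ l ∧ Odd #{p ∈ S | p ∈ l} := by
  have := Fintype.ofFinite L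
  by_contra! h
  rw [← Nat.not_even_iff_odd, ← sum_card_filter_mem_eq_card (L := L) hy] at hS
  exact hS (even_sum _ fun l hl ↦ Nat.not_odd_iff_even.mp (h l ((mem_filter_univ l).mp hl)))

theorem eq_of_cover_of_card_le_pointCount [Nondegenerate P L] {T : Finset L} {m : L}
    (hcover : ∀ q : P, q ∈ m → ∃ t ∈ T, q ∈ t) (hcard : #T ≤ pointCount P m) (hm : m ∉ T)
    {x : P} (hxm : x ∈ m) {t₁ t₂ : L} (ht₁ : t₁ ∈ T) (ht₂ : t₂ ∈ T) (hx₁ : x ∈ t₁)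
    (hx₂ : x ∈ t₂) : t₁ = t₂ := by
  have meet_unique {p q : P} {t : L} (ht : t ∈ T) (hpm : p ∈ m) (hqm : q ∈ m) (hpt : p ∈ t)
      (hqt : q ∈ t) : p = q :=
    (eq_or_eq hpm hqm hpt hqt).resolve_right (ne_of_mem_of_not_mem ht hm).symm
  choose cover cover_mem mem_cover using hcover
  let f (q : {q : P // q ∈ m}) : T := ⟨cover q q.2, cover_mem q q.2⟩
  have f_injective : Function.Injective f := fun p q hpq ↦
    Subtype.ext <| meet_unique (cover_mem p p.2) p.2 q.2 (mem_cover p p.2) <| by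
      rw [show cover p p.2 = cover q q.2 from congrArg Subtype.val hpq]
      exact mem_cover q q.2
  have f_surjective : Function.Surjective f :=
    (f_injective.bijective_of_nat_card_le (by rwa [Nat.card_eq_finsetCard])).surjective
  have eq_cover_x {t : L} (ht : t ∈ T) (hxt : x ∈ t) : t = cover x hxm := by
    obtain ⟨q, hq⟩ := f_surjective ⟨t, ht⟩
    obtain rfl : cover q q.2 = t := congrArg Subtype.val hq
    obtain rfl : x = q := meet_unique ht hxm q.2 hxt (mem_cover q q.2)
    rfl
  rw [eq_cover_x ht₁ hx₁, eq_cover_x ht₂ hx₂]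

theorem exists_forall_mem_iff_mem_of_cover [ProjectivePlane P L] [Finite P] [Finite L]
    {T : Finset L} (hcover : ∀ q : P, ∃ t ∈ T, q ∈ t)
    (hcard : #T = ProjectivePlane.order P L + 1) : ∃ x : P, ∀ l : L, l ∈ T ↔ x ∈ l := by
  classical
  have := Fintype.ofFinite L
  have one_lt_card_T : 1 < #T := by have := ProjectivePlane.one_lt_order P L; lia
  obtain ⟨t₁, ht₁, t₂, ht₂, hne⟩ := one_lt_card.mp one_lt_card_T
  obtain ⟨x, ⟨hx₁, hx₂⟩, -⟩ := HasPoints.existsUnique_point P L t₁ t₂ hne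
  have pencil_subset : ({l : L | x ∈ l} : Finset L) ⊆ T := by
    intro m hm
    by_contra hmT
    exact hne <| eq_of_cover_of_card_le_pointCount (fun q _ ↦ hcover q)
      (hcard.trans (ProjectivePlane.pointCount_eq P m).symm).le hmT ((mem_filter_univ m).mp hm)
      ht₁ ht₂ hx₁ hx₂
  have pencil_eq : ({l : L | x ∈ l} : Finset L) = T :=
    eq_of_subset_of_card_le pencil_subset <| by
      rw [hcard, ← lineCount_eq_card_filter, ProjectivePlane.lineCount_eq]
  exact ⟨x, fun l ↦ by rw [← pencil_eq, mem_filter_univ]⟩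

/-- `C` is an arc: no line contains three distinct points of `C`. The type `L` of lines is an
explicit argument, as `C` does not determine it. -/
def IsArc (L : Type*) [Membership P L] (C : Finset P) : Prop :=
  ∀ p ∈ C, ∀ q ∈ C, ∀ r ∈ C, p ≠ q → p ≠ r → q ≠ r → ¬ ∃ l : L, p ∈ l ∧ q ∈ l ∧ r ∈ l

/-- `l` is a tangent line to `C`: it meets `C` in exactly one point. -/
def IsTangent (C : Finset P) (l : L) : Prop :=
  {p : P | p ∈ C ∧ p ∈ l}.ncard = 1

/-- `C` is an oval: an arc of `n + 1` points in a projective plane of order `n`. -/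
structure IsOval (L : Type*) [Membership P L] [ProjectivePlane P L] (C : Finset P) : Prop where
  isArc : IsArc L C
  card_eq : #C = ProjectivePlane.order P L + 1

/-- `x` is a nucleus of `C`: the tangent lines to `C` are precisely the lines through `x`. -/
def IsNucleus (L : Type*) [Membership P L] (C : Finset P) (x : P) : Prop :=
  ∀ l : L, IsTangent C l ↔ x ∈ l

variable {C : Finset P}

open Classical in
theorem isTangent_iff_card_filter_eq_one {l : L} : IsTangent C l ↔ #{p ∈ C | p ∈ l} = 1 := by
  rw [IsTangent, ← Set.ncard_coe_finset, coe_filter]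

theorem IsNucleus.notMem [HasLines P L] {x : P} (hx : IsNucleus L C x) (hC : 1 < #C) :
    x ∉ C := by
  classical
  intro hxC
  obtain ⟨p, hpC, hpx⟩ := exists_mem_ne hC x
  obtain ⟨l, ⟨hpl, hxl⟩, -⟩ := HasLines.existsUnique_line P L p x hpx
  have card_le_one := (isTangent_iff_card_filter_eq_one.mp ((hx l).mpr hxl)).le
  exact hpx <| Finset.card_le_one.mp card_le_one p (mem_filter.mpr ⟨hpC, hpl⟩) x
    (mem_filter.mpr ⟨hxC, hxl⟩)

namespace IsArc

open Classical in
theorem card_filter_mem_le_two (hC : IsArc L C) (l : L) : #{p ∈ C | p ∈ l} ≤ 2 := by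
  by_contra! h
  obtain ⟨p, q, r, hp, hq, hr, hpq, hpr, hqr⟩ := two_lt_card_iff.mp h
  rw [mem_filter] at hp hq hr
  exact hC p hp.1 q hq.1 r hr.1 hpq hpr hqr ⟨l, hp.2, hq.2, hr.2⟩

open Classical in
theorem isTangent_of_odd (hC : IsArc L C) {l : L} (hl : Odd #{p ∈ C | p ∈ l}) :
    IsTangent C l := by
  have := hC.card_filter_mem_le_two l
  rw [isTangent_iff_card_filter_eq_one]
  grind

open Classical in
theorem card_isTangent_mem_add_card [HasLines P L] [Fintype L] (hC : IsArc L C) {p : P}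
    (hp : p ∈ C) : #{l : L | p ∈ l ∧ IsTangent C l} + #C = lineCount L p + 1 := by
  have tangent_or_secant (l : L) (hl : l ∈ ({l : L | p ∈ l} : Finset L)) :
      (if IsTangent C l then 1 else 0) + #{q ∈ C.erase p | q ∈ l} = 1 := by
    have card_erase : #{q ∈ C.erase p | q ∈ l} + 1 = #{q ∈ C | q ∈ l} := by
      rw [filter_erase, card_erase_add_one (mem_filter.mpr ⟨hp, (mem_filter_univ l).mp hl⟩)]
    have := hC.card_filter_mem_le_two l
    rw [isTangent_iff_card_filter_eq_one]
    split_ifs <;> lia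
  calc #{l : L | p ∈ l ∧ IsTangent C l} + #C
      = #{l : L | p ∈ l ∧ IsTangent C l} + #(C.erase p) + 1 := by
        rw [add_assoc, card_erase_add_one hp]
    _ = ∑ l : L with p ∈ l, ((if IsTangent C l then 1 else 0) + #{q ∈ C.erase p | q ∈ l}) + 1 := by
        rw [sum_add_distrib, sum_card_filter_mem_eq_card (notMem_erase p C), ← card_filter,
          filter_filter]
    _ = lineCount L p + 1 := by
        rw [sum_congr rfl tangent_or_secant, ← card_eq_sum_ones, lineCount_eq_card_filter]

end IsArc

namespace IsOval

variable [ProjectivePlane P L] [Finite P]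

open Classical in
theorem card_isTangent_mem [Fintype L] (hC : IsOval L C) {p : P} (hp : p ∈ C) :
    #{l : L | p ∈ l ∧ IsTangent C l} = 1 := by
  have := hC.isArc.card_isTangent_mem_add_card hp
  rw [ProjectivePlane.lineCount_eq, hC.card_eq] at this
  lia

open Classical in
theorem card_isTangent [Fintype L] (hC : IsOval L C) :
    #{l : L | IsTangent C l} = ProjectivePlane.order P L + 1 := by
  have tangents_through (p : P) (hp : p ∈ C) :
      #(bipartiteAbove (· ∈ ·) {l : L | IsTangent C l} p) = 1 := by
    rw [bipartiteAbove, filter_filter, ← hC.card_isTangent_mem hp]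
    simp only [and_comm]
  have points_on (l : L) (hl : l ∈ ({l : L | IsTangent C l} : Finset L)) :
      #(bipartiteBelow (· ∈ ·) C l) = 1 :=
    isTangent_iff_card_filter_eq_one.mp ((mem_filter_univ l).mp hl)
  rw [← hC.card_eq, ← mul_one #C, card_mul_eq_card_mul _ tangents_through points_on, mul_one]

variable [Finite L]

theorem exists_isTangent_mem (hC : IsOval L C) (heven : Even (ProjectivePlane.order P L))
    (y : P) : ∃ l : L, IsTangent C l ∧ y ∈ l := by
  classical
  have := Fintype.ofFinite L
  by_cases hy : y ∈ C
  · obtain ⟨l, hl⟩ := card_pos.mp (hC.card_isTangent_mem hy ▸ one_pos)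
    exact ⟨l, ((mem_filter_univ l).mp hl).symm⟩
  · have odd_card : Odd #C := hC.card_eq ▸ heven.add_one
    obtain ⟨l, hyl, hl⟩ := exists_odd_card_filter_mem (L := L) odd_card hy
    exact ⟨l, hC.isArc.isTangent_of_odd hl, hyl⟩

theorem exists_isNucleus (hC : IsOval L C) (heven : Even (ProjectivePlane.order P L)) :
    ∃ x : P, IsNucleus L C x := by
  classical
  have := Fintype.ofFinite L
  simpa only [IsNucleus, mem_filter_univ] using
    exists_forall_mem_iff_mem_of_cover (T := {l : L | IsTangent C l})
      (by simpa only [mem_filter_univ] using hC.exists_isTangent_mem heven) hC.card_isTangent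

theorem one_lt_card (hC : IsOval L C) : 1 < #C := by
  have := ProjectivePlane.one_lt_order P L
  rw [hC.card_eq]
  lia

end IsOval

end

/-- In a finite projective plane of even order `n`, every oval (a set of
`n + 1` points, no three collinear) has a nucleus: a unique point `x` such
that every line through `x` is tangent to the oval; moreover the tangent
lines to the oval are precisely the lines through `x`, and `x` does not lie
on the oval. -/
theorem oval_nucleus_of_even_order
    (P L : Type) [Membership P L] [ProjectivePlane P L] [Fintype P] [Fintype L]
    (n : ℕ) (hn : ProjectivePlane.order P L = n) (heven : Even n)
    (C : Finset P) (hcard : C.card = n + 1)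
    (harc : ∀ p ∈ C, ∀ q ∈ C, ∀ r ∈ C, p ≠ q → p ≠ r → q ≠ r →
      ¬ ∃ l : L, p ∈ l ∧ q ∈ l ∧ r ∈ l) :
    -- there is a unique point all of whose lines are tangent to `C`
    (∃! x : P, ∀ l : L, x ∈ l → {p : P | p ∈ C ∧ p ∈ l}.ncard = 1) ∧
    -- for this point `x`, the tangent lines to `C` are exactly the lines
    -- through `x`, and `x ∉ C`
    (∃ x : P, x ∉ C ∧
      (∀ l : L, x ∈ l → {p : P | p ∈ C ∧ p ∈ l}.ncard = 1) ∧
      (∀ l : L, {p : P | p ∈ C ∧ p ∈ l}.ncard = 1 ↔ x ∈ l)) := by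
  subst hn
  have hC : IsOval L C := ⟨harc, hcard⟩
  obtain ⟨x, hx⟩ := hC.exists_isNucleus heven
  have hx_tangent (l : L) (hxl : x ∈ l) : IsTangent C l := (hx l).mpr hxl
  refine ⟨⟨x, hx_tangent, fun y hy ↦ ?_⟩, x, hx.notMem hC.one_lt_card, hx_tangent, hx⟩
  exact eq_of_forall_mem_imp_mem fun l hyl ↦ (hx l).mp (hy l hyl)
end
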